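/- arXiv:0810.3995 — 3 statements merged into one kernel-verified Lean document; each statement's English description precedes it below -/
import Mathlib

section
/- In the growth curve model with a fixed sample size n, if the distribution of the error matrix E is symmetric about the origin (E and −E have the same distribution), Σ̂(Y) is invertible almost surely, and γ̂(Y) is integrable, then the two-stage generalized least-squares estimator γ̂(Y) = C(X'X)⁻¹X'Y Σ̂(Y)⁻¹Z(Z'Σ̂(Y)⁻¹Z)⁻¹D' is an unbiased estimator of γ = CΘD', i.e., E[γ̂(Y)] = CΘD'. -/
/-!
Write `M = 1 - X (X'X)⁻¹ X'`, the orthogonal projection onto the complement of the column space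
of `X`. Since `M X = 0` and `X' M = 0`, the mean `XΘZ'` drops out of `Y' M Y`, so
`Σ̂(Y) = (n - m)⁻¹ E' M E`, an even function of `E`. With the weight
`B = Σ̂⁻¹ Z (Z' Σ̂⁻¹ Z)⁻¹`, the error of the estimator is, wherever `Z' B = 1`,
`γ̂ - CΘD' = C (X'X)⁻¹ X' E B D'`, which is odd in `E`; an integrable odd function of a
symmetric random matrix has mean zero (`integral_odd_eq_zero`).

The identity `Z' B = 1` holds whenever `Σ̂` is invertible: `Σ̂` is positive semidefinite because
`M = M' M`, hence positive definite, and so is `Z' Σ̂⁻¹ Z` because `Z` has full column rank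
(`transpose_mul_glsWeight`). Transferring the integral along the law of `E` needs the error to be
a measurable function of `E`, which comes down to measurability of the matrix inverse.
-/

open MeasureTheory ProbabilityTheory Filter Matrix Topology

/-- Entrywise measurability of a matrix-valued function; Mathlib puts no measurable space on
`Matrix`. -/
def EntryMeasurable {α ι κ : Type*} [MeasurableSpace α] (F : α → Matrix ι κ ℝ) : Prop :=
  ∀ i j, Measurable fun a => F a i j

namespace EntryMeasurable

variable {α ι κ l : Type*} [MeasurableSpace α]

lemma const (A : Matrix ι κ ℝ) : EntryMeasurable fun _ : α => A :=
  fun _ _ => measurable_const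

lemma transpose {F : α → Matrix ι κ ℝ} (hF : EntryMeasurable F) :
    EntryMeasurable fun a => (F a)ᵀ :=
  fun i j => hF j i

lemma smul {F : α → Matrix ι κ ℝ} {c : α → ℝ} (hc : Measurable c) (hF : EntryMeasurable F) :
    EntryMeasurable fun a => c a • F a :=
  fun i j => hc.mul (hF i j)

lemma mul [Fintype κ] {F : α → Matrix ι κ ℝ} {G : α → Matrix κ l ℝ}
    (hF : EntryMeasurable F) (hG : EntryMeasurable G) :
    EntryMeasurable fun a => F a * G a := by
  intro i j
  simp only [Matrix.mul_apply]
  exact Finset.measurable_fun_sum _ fun k _ => (hF i k).mul (hG k j)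

lemma det [Fintype ι] [DecidableEq ι] {F : α → Matrix ι ι ℝ} (hF : EntryMeasurable F) :
    Measurable fun a => (F a).det := by
  simp only [Matrix.det_apply']
  exact Finset.measurable_fun_sum _ fun σ _ =>
    measurable_const.mul (Finset.measurable_fun_prod _ fun i _ => hF _ _)

lemma inv [Fintype ι] [DecidableEq ι] {F : α → Matrix ι ι ℝ} (hF : EntryMeasurable F) :
    EntryMeasurable fun a => (F a)⁻¹ := by
  simp only [Matrix.inv_def, Ring.inverse_eq_inv']
  refine smul hF.det.inv fun i j => ?_
  simp only [Matrix.adjugate_apply]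
  refine det fun k l => ?_
  by_cases h : k = j
  · simp only [Matrix.updateRow_apply, h, if_true]
    exact measurable_const
  · simp only [Matrix.updateRow_apply, h, if_false]
    exact hF k l

end EntryMeasurable

lemma mulVec_injective_of_rank_eq {a b : ℕ} {A : Matrix (Fin a) (Fin b) ℝ} (h : A.rank = b) :
    Function.Injective A.mulVec := by
  rw [Matrix.mulVec_injective_iff, linearIndependent_iff_card_eq_finrank_span,
    Set.finrank, ← Matrix.rank_eq_finrank_span_cols, h, Fintype.card_fin]

lemma isUnit_det_transpose_mul_self {a b : ℕ} {A : Matrix (Fin a) (Fin b) ℝ} (h : A.rank = b) :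
    IsUnit (Aᵀ * A).det := by
  have := (Matrix.PosDef.one (n := Fin a) (R := ℝ)).conjTranspose_mul_mul_same
    (mulVec_injective_of_rank_eq h)
  rw [Matrix.mul_one, Matrix.conjTranspose_eq_transpose_of_trivial] at this
  exact (Matrix.isUnit_iff_isUnit_det _).1 this.isUnit

/-- The residual projection `1 - X (X'X)⁻¹ X'`. -/
noncomputable def residProj {n m : ℕ} (X : Matrix (Fin n) (Fin m) ℝ) : Matrix (Fin n) (Fin n) ℝ :=
  1 - X * (Xᵀ * X)⁻¹ * Xᵀ

section residProj

variable {n m : ℕ} {X : Matrix (Fin n) (Fin m) ℝ}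

lemma residProj_transpose : (residProj X)ᵀ = residProj X := by
  simp [residProj, Matrix.transpose_nonsing_inv, Matrix.mul_assoc]

lemma residProj_mul (hX : X.rank = m) : residProj X * X = 0 := by
  rw [residProj, Matrix.sub_mul, Matrix.one_mul, Matrix.mul_assoc, Matrix.mul_assoc,
    Matrix.nonsing_inv_mul _ (isUnit_det_transpose_mul_self hX), Matrix.mul_one, sub_self]

lemma transpose_mul_residProj (hX : X.rank = m) : Xᵀ * residProj X = 0 := by
  rw [← residProj_transpose, ← Matrix.transpose_mul, residProj_mul hX, Matrix.transpose_zero]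

lemma residProj_mul_self (hX : X.rank = m) : residProj X * residProj X = residProj X := by
  nth_rw 2 [residProj]
  rw [Matrix.mul_sub, Matrix.mul_one, ← Matrix.mul_assoc, ← Matrix.mul_assoc, residProj_mul hX]
  simp

end residProj

/-- The covariance estimator as a function of the data matrix. -/
noncomputable def covEst {n m p : ℕ} (X : Matrix (Fin n) (Fin m) ℝ) (e : Matrix (Fin n) (Fin p) ℝ) :
    Matrix (Fin p) (Fin p) ℝ :=
  ((n : ℝ) - (m : ℝ))⁻¹ • (eᵀ * residProj X * e)

/-- The second-stage weight `S⁻¹ Z (Z' S⁻¹ Z)⁻¹`. -/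
noncomputable def glsWeight {p q : ℕ} (Z : Matrix (Fin p) (Fin q) ℝ)
    (S : Matrix (Fin p) (Fin p) ℝ) : Matrix (Fin p) (Fin q) ℝ :=
  S⁻¹ * Z * (Zᵀ * S⁻¹ * Z)⁻¹

/-- The estimation error `γ̂ - CΘD'` as a function of the error matrix `e`, valid where the
covariance estimator is invertible. -/
noncomputable def glsError {n m p q s t : ℕ} (X : Matrix (Fin n) (Fin m) ℝ)
    (Z : Matrix (Fin p) (Fin q) ℝ) (C : Matrix (Fin s) (Fin m) ℝ) (D : Matrix (Fin t) (Fin q) ℝ)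
    (e : Matrix (Fin n) (Fin p) ℝ) : Matrix (Fin s) (Fin t) ℝ :=
  C * (Xᵀ * X)⁻¹ * Xᵀ * e * glsWeight Z (covEst X e) * Dᵀ

section estimator

variable {n m p q s t : ℕ} {X : Matrix (Fin n) (Fin m) ℝ} {Z : Matrix (Fin p) (Fin q) ℝ}

/-- The covariance estimator does not see the mean of the model. -/
lemma covEst_add (hX : X.rank = m) (K : Matrix (Fin m) (Fin p) ℝ) (e : Matrix (Fin n) (Fin p) ℝ) :
    covEst X (X * K + e) = covEst X e := by
  have h : (X * K + e)ᵀ * residProj X = eᵀ * residProj X := by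
    rw [Matrix.transpose_add, Matrix.transpose_mul, Matrix.add_mul, Matrix.mul_assoc,
      transpose_mul_residProj hX, Matrix.mul_zero, zero_add]
  rw [covEst, covEst, h, Matrix.mul_add, ← Matrix.mul_assoc, Matrix.mul_assoc _ _ X,
    residProj_mul hX, Matrix.mul_zero, Matrix.zero_mul, zero_add]

lemma covEst_neg (e : Matrix (Fin n) (Fin p) ℝ) : covEst X (-e) = covEst X e := by
  simp [covEst]

lemma covEst_posSemidef (hnm : m < n) (hX : X.rank = m) (e : Matrix (Fin n) (Fin p) ℝ) :
    (covEst X e).PosSemidef := by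
  have h := Matrix.posSemidef_conjTranspose_mul_self (residProj X * e)
  rw [Matrix.conjTranspose_eq_transpose_of_trivial, Matrix.transpose_mul, residProj_transpose,
    Matrix.mul_assoc, ← Matrix.mul_assoc (residProj X), residProj_mul_self hX,
    ← Matrix.mul_assoc] at h
  refine h.smul ?_
  have : (m : ℝ) < n := by exact_mod_cast hnm
  exact inv_nonneg.2 (sub_nonneg.2 this.le)

lemma transpose_mul_glsWeight (hZ : Z.rank = q) {S : Matrix (Fin p) (Fin p) ℝ}
    (hS : S.PosDef) : Zᵀ * glsWeight Z S = 1 := by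
  have h := hS.inv.conjTranspose_mul_mul_same (mulVec_injective_of_rank_eq hZ)
  rw [Matrix.conjTranspose_eq_transpose_of_trivial] at h
  rw [glsWeight, ← Matrix.mul_assoc, ← Matrix.mul_assoc]
  exact Matrix.mul_nonsing_inv _ ((Matrix.isUnit_iff_isUnit_det _).1 h.isUnit)

variable (X Z) (C : Matrix (Fin s) (Fin m) ℝ) (D : Matrix (Fin t) (Fin q) ℝ)

lemma glsError_neg (e : Matrix (Fin n) (Fin p) ℝ) :
    glsError X Z C D (-e) = -glsError X Z C D e := by
  simp [glsError, covEst_neg]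

lemma entryMeasurable_glsError :
    EntryMeasurable fun e : Fin n → Fin p → ℝ => glsError X Z C D (Matrix.of e) := by
  have he : EntryMeasurable fun e : Fin n → Fin p → ℝ => Matrix.of e := fun i j => by
    simp only [Matrix.of_apply]
    fun_prop
  have hS : EntryMeasurable fun e : Fin n → Fin p → ℝ => (covEst X (Matrix.of e))⁻¹ :=
    (EntryMeasurable.smul measurable_const ((he.transpose.mul (.const _)).mul he)).inv
  exact ((EntryMeasurable.const _).mul he).mul
    ((hS.mul (.const Z)).mul (((EntryMeasurable.const Zᵀ).mul hS).mul (.const Z)).inv)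
    |>.mul (.const _)

/-- The error decomposition of the two-stage estimator. -/
lemma estimator_eq (hX : X.rank = m) (Θ : Matrix (Fin m) (Fin q) ℝ)
    (e : Matrix (Fin n) (Fin p) ℝ) (hB : Zᵀ * glsWeight Z (covEst X e) = 1) :
    C * (Xᵀ * X)⁻¹ * Xᵀ * (X * Θ * Zᵀ + e) * glsWeight Z (covEst X e) * Dᵀ
      = C * Θ * Dᵀ + glsError X Z C D e := by
  have h : C * (Xᵀ * X)⁻¹ * Xᵀ * (X * Θ * Zᵀ) * glsWeight Z (covEst X e) = C * Θ := by
    calc _ = C * ((Xᵀ * X)⁻¹ * (Xᵀ * X)) * Θ * (Zᵀ * glsWeight Z (covEst X e)) := by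
          simp only [Matrix.mul_assoc]
      _ = C * Θ := by
          rw [hB, Matrix.nonsing_inv_mul _ (isUnit_det_transpose_mul_self hX), Matrix.mul_one,
            Matrix.mul_one]
  rw [Matrix.mul_add, Matrix.add_mul, Matrix.add_mul, h, glsError]

end estimator

/-- An odd function of a symmetric random element has mean zero. Integrability is not needed: the
Bochner integral of a non-integrable function is zero. -/
lemma integral_odd_eq_zero {Ω V : Type*} [MeasurableSpace Ω] [MeasurableSpace V] [Neg V]
    [MeasurableNeg V] {μ : Measure Ω} {e : Ω → V} (he : Measurable e)
    (hsymm : μ.map e = μ.map fun ω => -e ω) {g : V → ℝ} (hg : Measurable g)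
    (hodd : ∀ v, g (-v) = -g v) : ∫ ω, g (e ω) ∂μ = 0 := by
  have h : ∫ ω, g (e ω) ∂μ = -∫ ω, g (e ω) ∂μ := by
    conv_lhs => rw [← integral_map he.aemeasurable hg.aestronglyMeasurable, hsymm,
      integral_map he.fun_neg.aemeasurable hg.aestronglyMeasurable]
    simp only [hodd, integral_neg]
  linarith

/-- **Unbiasedness of the two-stage GLS estimator under symmetric errors.**
In the fixed-`n` growth curve model `Y = XΘZ' + E`, if the error matrix `E` is
symmetric about the origin, `Σ̂(Y)` is a.s. invertible and `γ̂(Y)` is integrable,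
then `E[γ̂(Y)] = CΘD'`. -/
theorem two_stage_GLS_unbiased
    {n m p q s t : ℕ} (hnm : m < n) (hpq : q < p)
    (X : Matrix (Fin n) (Fin m) ℝ) (hXrank : X.rank = m)
    (Z : Matrix (Fin p) (Fin q) ℝ) (hZrank : Z.rank = q)
    (Θ : Matrix (Fin m) (Fin q) ℝ)
    (C : Matrix (Fin s) (Fin m) ℝ) (D : Matrix (Fin t) (Fin q) ℝ)
    {Ω : Type*} [MeasurableSpace Ω] (μ : Measure Ω) [IsProbabilityMeasure μ]
    (E : Ω → Matrix (Fin n) (Fin p) ℝ)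
    (hEmeas : Measurable fun ω => (fun a j => E ω a j : Fin n → Fin p → ℝ))
    (hEint : ∀ a j, Integrable (fun ω => E ω a j) μ)
    (hEmean : ∀ a j, ∫ ω, E ω a j ∂μ = 0)
    -- the distribution of `E` is symmetric about the origin
    (hsymm : μ.map (fun ω => (fun a j => E ω a j : Fin n → Fin p → ℝ)) =
      μ.map (fun ω => (fun a j => -E ω a j : Fin n → Fin p → ℝ)))
    (Y : Ω → Matrix (Fin n) (Fin p) ℝ)
    (hY : ∀ ω, Y ω = X * Θ * Zᵀ + E ω)
    (Sighat : Ω → Matrix (Fin p) (Fin p) ℝ)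
    (hSighat : ∀ ω, Sighat ω =
      ((n : ℝ) - (m : ℝ))⁻¹ •
        ((Y ω)ᵀ * ((1 : Matrix (Fin n) (Fin n) ℝ) - X * (Xᵀ * X)⁻¹ * Xᵀ) * Y ω))
    -- `Σ̂(Y)` is invertible almost surely
    (hSighatInv : ∀ᵐ ω ∂μ, IsUnit (Sighat ω).det)
    (γhat : Ω → Matrix (Fin s) (Fin t) ℝ)
    (hγhat : ∀ ω, γhat ω =
      C * (Xᵀ * X)⁻¹ * Xᵀ * Y ω * (Sighat ω)⁻¹ * Z * (Zᵀ * (Sighat ω)⁻¹ * Z)⁻¹ * Dᵀ)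
    (hγint : ∀ i j, Integrable (fun ω => γhat ω i j) μ) :
    ∀ i j, ∫ ω, γhat ω i j ∂μ = (C * Θ * Dᵀ) i j := by
  intro i j
  have hcov : ∀ ω, Sighat ω = covEst X (E ω) := fun ω => by
    rw [← covEst_add hXrank (Θ * Zᵀ) (E ω), ← Matrix.mul_assoc, ← hY, hSighat]
    rfl
  have hdecomp : ∀ᵐ ω ∂μ, γhat ω i j = (C * Θ * Dᵀ) i j + glsError X Z C D (E ω) i j := by
    filter_upwards [hSighatInv] with ω hω
    rw [hcov] at hω
    have hpos := (covEst_posSemidef hnm hXrank (E ω)).posDef_iff_det_ne_zero.2 hω.ne_zero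
    rw [← Matrix.add_apply, ← estimator_eq X Z C D hXrank Θ _ (transpose_mul_glsWeight hZrank hpos),
      hγhat, hcov, hY]
    simp only [glsWeight, Matrix.mul_assoc]
  have hint : Integrable (fun ω => glsError X Z C D (E ω) i j) μ := by
    refine ((hγint i j).sub (integrable_const ((C * Θ * Dᵀ) i j))).congr ?_
    filter_upwards [hdecomp] with ω hω
    simp [hω]
  have hzero : ∫ ω, glsError X Z C D (E ω) i j ∂μ = 0 :=
    integral_odd_eq_zero hEmeas hsymm (entryMeasurable_glsError X Z C D i j) fun v =>
      congrFun₂ (glsError_neg X Z C D (Matrix.of v)) i j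
  rw [integral_congr_ae hdecomp, integral_add (integrable_const _) hint, hzero]
  simp
end

section
/- Let Σ₀ be a positive definite p×p matrix and Z a p×q matrix of rank q with p > q, and set P_Z = Z(Z'Z)⁻¹Z' and A = P_Z Σ₀⁻¹ P_Z. Then the matrix M = Z(Z'Σ₀⁻¹Z)⁻¹Z' is the Moore–Penrose inverse of A; that is, M satisfies the four Penrose conditions A M A = A, M A M = M, (A M)' = A M, and (M A)' = M A. -/
/-!
Write `G = ZᵀZ` and `K = ZᵀΣ₀⁻¹Z`; both are Gram matrices of the injective map `Z` with respect to
positive definite forms, hence invertible. Since `P_Z Z = Z` and `Zᵀ P_Z = Zᵀ`, cancelling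
`G` and `K` gives `A M = Z G⁻¹ K K⁻¹ Zᵀ = P_Z` and, symmetrically, `M A = P_Z`. As `P_Z` is symmetric
and fixes `A` and `M` under left multiplication, all four Penrose conditions follow.
-/

open Matrix

/-- A real matrix whose rank equals its number of columns has trivial kernel. -/
lemma mulVec_injective_of_rank_eq_s3 {p q : ℕ} (Z : Matrix (Fin p) (Fin q) ℝ) (hZ : Z.rank = q) :
    Function.Injective Z.mulVec := by
  have h := LinearMap.finrank_range_add_finrank_ker Z.mulVecLin
  rw [← Matrix.rank, hZ, Module.finrank_fin_fun] at h
  have hker : LinearMap.ker Z.mulVecLin = ⊥ := Submodule.finrank_eq_zero.mp (by omega)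
  exact LinearMap.ker_eq_bot.mp hker

/-- Invertibility of the Gram matrix `ZᵀSZ`, which is itself positive definite. -/
lemma isUnit_det_gram {p q : ℕ} (S : Matrix (Fin p) (Fin p) ℝ) (hS : S.PosDef)
    (Z : Matrix (Fin p) (Fin q) ℝ) (hZ : Z.rank = q) : IsUnit (Zᵀ * S * Z).det := by
  have h := (hS.conjTranspose_mul_mul_same (mulVec_injective_of_rank_eq_s3 Z hZ)).isUnit
  rw [conjTranspose_eq_transpose_of_trivial] at h
  exact (isUnit_iff_isUnit_det _).mp h

/-- **Moore–Penrose inverse identity (equation (3) of the paper).**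
For positive definite `Σ₀` and `Z` of full column rank `q < p`, with
`P_Z = Z(Z'Z)⁻¹Z'` and `A = P_Z Σ₀⁻¹ P_Z`, the matrix `M = Z(Z'Σ₀⁻¹Z)⁻¹Z'`
satisfies the four Penrose conditions, i.e. `M = A⁺`. -/
theorem pseudoinverse_of_projected_inverse
    {p q : ℕ} (hpq : q < p)
    (Sig0 : Matrix (Fin p) (Fin p) ℝ) (hSig0 : Sig0.PosDef)
    (Z : Matrix (Fin p) (Fin q) ℝ) (hZrank : Z.rank = q)
    (PZ A M : Matrix (Fin p) (Fin p) ℝ)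
    (hPZ : PZ = Z * (Zᵀ * Z)⁻¹ * Zᵀ)
    (hA : A = PZ * Sig0⁻¹ * PZ)
    (hM : M = Z * (Zᵀ * Sig0⁻¹ * Z)⁻¹ * Zᵀ) :
    A * M * A = A ∧ M * A * M = M ∧ (A * M)ᵀ = A * M ∧ (M * A)ᵀ = M * A := by
  have hK := isUnit_det_gram Sig0⁻¹ hSig0.inv Z hZrank
  have hG : IsUnit (Zᵀ * Z).det := by
    simpa using isUnit_det_gram 1 Matrix.PosDef.one Z hZrank
  have hPZZ : PZ * Z = Z := by
    rw [hPZ, Matrix.mul_assoc, Matrix.mul_assoc, nonsing_inv_mul _ hG, Matrix.mul_one]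
  have hZPZ : Zᵀ * PZ = Zᵀ := by
    rw [hPZ, ← Matrix.mul_assoc, ← Matrix.mul_assoc, mul_nonsing_inv _ hG, Matrix.one_mul]
  have hPZt : PZᵀ = PZ := by
    rw [hPZ]
    simp [Matrix.transpose_mul, transpose_nonsing_inv, Matrix.mul_assoc]
  have hPP : PZ * PZ = PZ := by
    nth_rewrite 2 [hPZ]
    rw [← Matrix.mul_assoc, ← Matrix.mul_assoc, hPZZ, ← hPZ]
  have hPA : PZ * A = A := by
    rw [hA, ← Matrix.mul_assoc, ← Matrix.mul_assoc, hPP]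
  have hPM : PZ * M = M := by
    rw [hM, ← Matrix.mul_assoc, ← Matrix.mul_assoc, hPZZ]
  have hAM : A * M = PZ := by
    calc A * M = PZ * Sig0⁻¹ * (PZ * M) := by rw [hA, Matrix.mul_assoc]
      _ = Z * (Zᵀ * Z)⁻¹ * ((Zᵀ * Sig0⁻¹ * Z) * (Zᵀ * Sig0⁻¹ * Z)⁻¹) * Zᵀ := by
        rw [hPM, hPZ, hM]
        simp only [Matrix.mul_assoc]
      _ = PZ := by rw [mul_nonsing_inv _ hK, Matrix.mul_one, hPZ]
  have hMA : M * A = PZ := by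
    calc M * A = Z * (Zᵀ * Sig0⁻¹ * Z)⁻¹ * (Zᵀ * PZ) * Sig0⁻¹ * PZ := by
          rw [hA, hM]
          simp only [Matrix.mul_assoc]
      _ = Z * ((Zᵀ * Sig0⁻¹ * Z)⁻¹ * (Zᵀ * Sig0⁻¹ * Z)) * (Zᵀ * Z)⁻¹ * Zᵀ := by
        rw [hZPZ, hPZ]
        simp only [Matrix.mul_assoc]
      _ = PZ := by rw [nonsing_inv_mul _ hK, Matrix.mul_one, hPZ]
  rw [hAM, hMA]
  exact ⟨hPA, hPM, hPZt, hPZt⟩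
end

section
/- Let (x_l)_{l≥1} be a sequence in ℝ^m and for each n let X_n be the n×m matrix with rows x_1', …, x_n'; assume X_n has rank m for all n > m and that (1/n) X_n'X_n → R as n → ∞ for some positive definite m×m matrix R. Let s_{n,l} = ((X_n'X_n)⁻¹X_n')·e_l denote the l-th column of (X_n'X_n)⁻¹X_n', i.e., s_{n,l} = (X_n'X_n)⁻¹x_l. Then the columns scaled by √n are uniformly small: max_{1≤l≤n} ‖√n s_{n,l}‖ → 0 as n → ∞. -/
/-!
Write `Gₙ = Xₙ'Xₙ` and `Aₙ = Gₙ / n`. For large `n`, `√n s_{n,l} = Aₙ⁻¹ (x_l / √n)`, and `Aₙ⁻¹ → R⁻¹`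
has bounded entries. Hence it suffices that `max_{l < n} ‖x_l‖² / n → 0`. The diagonal entry
`(Gₙ)ⱼⱼ = ∑_{l < n} (x_l)ⱼ²` is a partial sum whose quotient by `n` converges, so its increments
satisfy `(x_l)ⱼ² = o(l)` (`tendsto_div_of_averages`), and a nonnegative sequence that is `o(l)` has
its running maximum `o(n)` (`eventually_forall_lt_le_mul`).
-/

open Filter Matrix Topology

/-- If the averages of `a` converge, then `a n = o(n)`: the two averages
`(∑_{l ≤ n} a l) / (n + 1)` and `(∑_{l < n} a l) / n` have the same limit. -/
lemma tendsto_div_of_averages {a : ℕ → ℝ} {r : ℝ}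
    (h : Tendsto (fun n : ℕ => (∑ l ∈ Finset.range n, a l) / (n : ℝ)) atTop (𝓝 r)) :
    Tendsto (fun n : ℕ => a n / (n : ℝ)) atTop (𝓝 0) := by
  have h1 := (tendsto_add_atTop_iff_nat 1).2 h
  have h2 : Tendsto (fun n : ℕ => 1 + 1 / (n : ℝ)) atTop (𝓝 (1 + 0)) :=
    tendsto_const_nhds.add tendsto_one_div_atTop_nhds_zero_nat
  have h3 := (h1.mul h2).sub h
  rw [add_zero, mul_one, sub_self] at h3
  refine h3.congr' ?_
  filter_upwards [eventually_gt_atTop 0] with n hn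
  have hn' : (n : ℝ) ≠ 0 := by positivity
  have hn1 : (n : ℝ) + 1 ≠ 0 := by positivity
  rw [Finset.sum_range_succ]
  push_cast
  field_simp
  ring

lemma eventually_forall_lt_le_mul {a : ℕ → ℝ} (ha : ∀ n, 0 ≤ a n)
    (h : Tendsto (fun n : ℕ => a n / (n : ℝ)) atTop (𝓝 0)) {ε : ℝ} (hε : 0 < ε) :
    ∀ᶠ n : ℕ in atTop, ∀ l < n, a l ≤ ε * n := by
  obtain ⟨L, hL⟩ := eventually_atTop.1
    ((h.eventually_lt_const hε).and (eventually_gt_atTop 0))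
  -- The finitely many terms below `L` are bounded by their sum, which is eventually at most `ε * n`.
  have hC : ∀ᶠ n : ℕ in atTop, (∑ l ∈ Finset.range L, a l) ≤ ε * n :=
    (tendsto_natCast_atTop_atTop.const_mul_atTop hε).eventually_ge_atTop _
  filter_upwards [hC] with n hn l hl
  rcases lt_or_ge l L with hlL | hlL
  · exact (Finset.single_le_sum (fun i _ => ha i) (Finset.mem_range.2 hlL)).trans hn
  · obtain ⟨h1, h2⟩ := hL l hlL
    have h2' : (0 : ℝ) < l := by exact_mod_cast h2
    have hln : (l : ℝ) ≤ n := by exact_mod_cast hl.le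
    rw [div_lt_iff₀ h2'] at h1
    exact h1.le.trans (by gcongr)

lemma tendsto_matrix_inv {m : ℕ} {A : ℕ → Matrix (Fin m) (Fin m) ℝ}
    {R : Matrix (Fin m) (Fin m) ℝ} (hR : R.det ≠ 0) (h : Tendsto A atTop (𝓝 R)) :
    Tendsto (fun n => (A n)⁻¹) atTop (𝓝 R⁻¹) := by
  have hdet : Tendsto (fun n => (A n).det) atTop (𝓝 R.det) :=
    ((continuous_id.matrix_det).tendsto R).comp h
  have hadj : Tendsto (fun n => (A n).adjugate) atTop (𝓝 R.adjugate) :=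
    ((continuous_id.matrix_adjugate).tendsto R).comp h
  simp only [Matrix.inv_def, Ring.inverse_eq_inv']
  exact (hdet.inv₀ hR).smul hadj

/-- **Lemma 4.1 of the paper (uniform negligibility of scaled columns of
`(Xₙ'Xₙ)⁻¹Xₙ'`).**  Under condition (15), the columns `s_{n,l} = (Xₙ'Xₙ)⁻¹ x_l`
scaled by `√n` are uniformly small: `max_{1 ≤ l ≤ n} ‖√n s_{n,l}‖ → 0`. -/
theorem scaled_design_columns_uniformly_small
    {m : ℕ} (hm : 0 < m)
    (x : ℕ → Fin m → ℝ)
    (X : (n : ℕ) → Matrix (Fin n) (Fin m) ℝ)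
    (hX : ∀ n (l : Fin n) i, X n l i = x l i)
    (hXrank : ∀ n, m < n → (X n).rank = m)
    (R : Matrix (Fin m) (Fin m) ℝ) (hR : R.PosDef)
    (hRlim : ∀ i j, Tendsto (fun n => (((X n)ᵀ * X n) i j) / (n : ℝ)) atTop (𝓝 (R i j)))
    (s : (n : ℕ) → ℕ → Fin m → ℝ)
    (hs : ∀ n l, s n l = ((X n)ᵀ * X n)⁻¹ *ᵥ x l) :
    ∀ δ > (0 : ℝ), ∃ N : ℕ, ∀ n ≥ N, ∀ l < n,
      Real.sqrt (∑ i : Fin m, (Real.sqrt (n : ℝ) * s n l i) ^ 2) < δ := by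
  intro δ hδ
  have hRdet : R.det ≠ 0 := hR.det_pos.ne'
  have hsmall : ∀ j, Tendsto (fun n : ℕ => (x n j) ^ 2 / (n : ℝ)) atTop (𝓝 0) := by
    intro j
    refine tendsto_div_of_averages (r := R j j) ((hRlim j j).congr fun n => ?_)
    rw [Matrix.mul_apply, Finset.sum_range]
    simp only [Matrix.transpose_apply, hX, sq]
  have hA : Tendsto (fun n : ℕ => ((n : ℝ)⁻¹) • ((X n)ᵀ * X n)) atTop (𝓝 R) := by
    refine tendsto_pi_nhds.2 fun i => tendsto_pi_nhds.2 fun j => (hRlim i j).congr fun n => ?_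
    simp only [Matrix.smul_apply, smul_eq_mul, div_eq_inv_mul]
  have hB := tendsto_matrix_inv hRdet hA
  have hdet : ∀ᶠ n : ℕ in atTop, (((n : ℝ)⁻¹) • ((X n)ᵀ * X n)).det ≠ 0 :=
    (((continuous_id.matrix_det).tendsto R).comp hA).eventually_ne hRdet
  obtain ⟨K, hK0, hK⟩ : ∃ K : ℝ, 0 < K ∧ ∀ i j, |R⁻¹ i j| < K := by
    refine ⟨∑ i, ∑ j, |R⁻¹ i j| + 1, by positivity, fun i j => ?_⟩
    have h1 : |R⁻¹ i j| ≤ ∑ j, |R⁻¹ i j| :=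
      Finset.single_le_sum (f := fun j => |R⁻¹ i j|) (fun _ _ => abs_nonneg _) (Finset.mem_univ j)
    have h2 : ∑ j, |R⁻¹ i j| ≤ ∑ i, ∑ j, |R⁻¹ i j| :=
      Finset.single_le_sum (f := fun i => ∑ j, |R⁻¹ i j|) (fun _ _ => by positivity)
        (Finset.mem_univ i)
    linarith
  have hBK : ∀ᶠ n : ℕ in atTop, ∀ i j, |(((n : ℝ)⁻¹) • ((X n)ᵀ * X n))⁻¹ i j| < K := by
    refine eventually_all.2 fun i => eventually_all.2 fun j => ?_
    exact (tendsto_pi_nhds.1 (tendsto_pi_nhds.1 hB i) j).abs.eventually_lt_const (hK i j)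
  have hm' : (1 : ℝ) ≤ m := by exact_mod_cast hm
  -- With `|Aₙ⁻¹| ≤ K` and `|x_l / √n| ≤ ε` entrywise, each coordinate of `√n s_{n,l}` is at most
  -- `m K ε = δ / (2 m)`.
  obtain ⟨ε, hε, hεK⟩ : ∃ ε : ℝ, 0 < ε ∧ m * (K * ε) = δ / (2 * m) :=
    ⟨δ / (2 * m ^ 2 * K), by positivity, by field_simp⟩
  have hx : ∀ᶠ n : ℕ in atTop, ∀ j, ∀ l < n, (x l j) ^ 2 ≤ ε ^ 2 * n :=
    eventually_all.2 fun j =>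
      eventually_forall_lt_le_mul (fun n => sq_nonneg _) (hsmall j) (by positivity)
  obtain ⟨N, hN⟩ := eventually_atTop.1 (hdet.and (hBK.and (hx.and (eventually_gt_atTop 0))))
  refine ⟨N, fun n hn l hl => ?_⟩
  obtain ⟨hd, hb, hxn, hn0⟩ := hN n hn
  have hn0' : (0 : ℝ) < n := by exact_mod_cast hn0
  have hinv : ((X n)ᵀ * X n)⁻¹ = (n : ℝ)⁻¹ • (((n : ℝ)⁻¹) • ((X n)ᵀ * X n))⁻¹ := by
    refine Matrix.inv_eq_right_inv ?_
    rw [Matrix.mul_smul, ← Matrix.smul_mul, Matrix.mul_nonsing_inv _ (isUnit_iff_ne_zero.2 hd)]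
  have hcoord : ∀ i, |Real.sqrt n * s n l i| ≤ δ / (2 * m) := by
    intro i
    have hsq : 0 < Real.sqrt n := Real.sqrt_pos.2 hn0'
    have hxl : ∀ j, |x l j| ≤ ε * Real.sqrt n := fun j => by
      refine abs_le_of_sq_le_sq ?_ (by positivity)
      rw [mul_pow, Real.sq_sqrt hn0'.le]
      exact hxn j l hl
    have hsum : |∑ j, (((n : ℝ)⁻¹) • ((X n)ᵀ * X n))⁻¹ i j * x l j|
        ≤ m * (K * (ε * Real.sqrt n)) := by
      refine (Finset.abs_sum_le_sum_abs _ _).trans ?_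
      refine (Finset.sum_le_card_nsmul _ _ (K * (ε * Real.sqrt n)) fun j _ => ?_).trans_eq ?_
      · rw [abs_mul]
        exact mul_le_mul (hb i j).le (hxl j) (abs_nonneg _) hK0.le
      · simp
    rw [hs, hinv, Matrix.smul_mulVec, Pi.smul_apply, smul_eq_mul, abs_mul, abs_mul,
      abs_of_pos hsq, abs_of_pos (inv_pos.2 hn0'), ← hεK]
    calc Real.sqrt n * ((n : ℝ)⁻¹ * |((((n : ℝ)⁻¹) • ((X n)ᵀ * X n))⁻¹ *ᵥ x l) i|)
        ≤ Real.sqrt n * ((n : ℝ)⁻¹ * (m * (K * (ε * Real.sqrt n)))) := by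
          gcongr
          exact hsum
      _ = (Real.sqrt n * Real.sqrt n) * (n : ℝ)⁻¹ * (m * (K * ε)) := by ring
      _ = m * (K * ε) := by
          rw [Real.mul_self_sqrt hn0'.le, mul_inv_cancel₀ hn0'.ne', one_mul]
  rw [Real.sqrt_lt' hδ]
  calc ∑ i : Fin m, (Real.sqrt (n : ℝ) * s n l i) ^ 2
      ≤ ∑ _i : Fin m, (δ / (2 * m)) ^ 2 :=
        Finset.sum_le_sum fun i _ => sq_le_sq' (abs_le.1 (hcoord i)).1 (abs_le.1 (hcoord i)).2
    _ = δ ^ 2 / (4 * m) := by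
        simp only [Finset.sum_const, Finset.card_univ, Fintype.card_fin, nsmul_eq_mul]
        field_simp
        norm_num
    _ < δ ^ 2 := div_lt_self (by positivity) (by linarith)
end
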